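/- arXiv:1509.05246 — 3 statements merged into one kernel-verified Lean document; each statement's English description precedes it below -/
import Mathlib

section
/- Let (X,Σ,μ,T) be an ergodic measure-preserving ℤ^d-system and f ∈ L²(X,μ). The following are equivalent: (1) (X,T) is μ-f-mean sensitive; (2) (X,T) is μ-f-mean expansive; (3) there exists ε > 0 such that for μ-almost every x, μ(B_ε^f(x)) = 0, where B_ε^f(x) := {y : d_f(x,y) ≤ ε}. -/
open MeasureTheory Filter Finset Metric
open scoped Classical

noncomputable section

/-- The box `{0,…,n−1}^d` inside `ℤ^d`. -/
def Fbox (d n : ℕ) : Finset (Fin d → ℤ) :=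
  Fintype.piFinset fun _ => Finset.Icc (0 : ℤ) ((n : ℤ) - 1)

/-- Upper density of a subset of `ℤ^d` along the boxes `F_n`. -/
def upperDensity (d : ℕ) (S : Set (Fin d → ℤ)) : ℝ :=
  Filter.limsup
    (fun n : ℕ => (((Fbox d n).filter (fun j => j ∈ S)).card : ℝ) / ((Fbox d n).card : ℝ))
    Filter.atTop

/-- Lower density of a subset of `ℤ^d` along the boxes `F_n`. -/
def lowerDensity (d : ℕ) (S : Set (Fin d → ℤ)) : ℝ :=
  Filter.liminf
    (fun n : ℕ => (((Fbox d n).filter (fun j => j ∈ S)).card : ℝ) / ((Fbox d n).card : ℝ))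
    Filter.atTop

variable {X : Type*}

/-- The pseudometric `d_f(x,y) = limsup_n ((1/|F_n|) Σ_{j∈F_n} |f(T^j x) − f(T^j y)|²)^{1/2}`. -/
def dF {d : ℕ} (T : (Fin d → ℤ) → X → X) (f : X → ℂ) (x y : X) : ℝ :=
  Filter.limsup (fun n : ℕ =>
    Real.sqrt ((∑ j ∈ Fbox d n, ‖f (T j x) - f (T j y)‖ ^ 2) / ((Fbox d n).card : ℝ)))
    Filter.atTop

/-- `x` is a generic point for `|f|²`:
the Birkhoff averages of `|f|²` along `x` converge to `∫ |f|² dμ`. -/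
def genericSq {d : ℕ} [MeasurableSpace X] (μ : Measure X) (T : (Fin d → ℤ) → X → X)
    (f : X → ℂ) (x : X) : Prop :=
  Filter.Tendsto
    (fun n : ℕ => (∑ j ∈ Fbox d n, ‖f (T j x)‖ ^ 2) / ((Fbox d n).card : ℝ))
    Filter.atTop (nhds (∫ y, ‖f y‖ ^ 2 ∂μ))

/-- `ε` is a `μ`-sensitivity constant for `f`: every positive measure set contains two
generic points `x, y` with `d_f(x,y) > ε`. -/
def SensitivityConstant {d : ℕ} [MeasurableSpace X] (μ : Measure X)
    (T : (Fin d → ℤ) → X → X) (f : X → ℂ) (ε : ℝ) : Prop :=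
  0 < ε ∧ ∀ A : Set X, MeasurableSet A → 0 < μ A →
    ∃ x ∈ A, ∃ y ∈ A, genericSq μ T f x ∧ genericSq μ T f y ∧ ε < dF T f x y

/-- `f` is `μ`-mean sensitive (`f ∈ H_ms`). -/
def MeanSensitiveFun {d : ℕ} [MeasurableSpace X] (μ : Measure X)
    (T : (Fin d → ℤ) → X → X) (f : X → ℂ) : Prop :=
  ∃ ε : ℝ, SensitivityConstant μ T f ε

/-- `f` is `μ`-mean expansive: for some `ε > 0`, `μ×μ {(x,y) : d_f(x,y) > ε} = 1`. -/
def MeanExpansiveFun {d : ℕ} [MeasurableSpace X] (μ : Measure X)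
    (T : (Fin d → ℤ) → X → X) (f : X → ℂ) : Prop :=
  ∃ ε : ℝ, 0 < ε ∧ (μ.prod μ) {p : X × X | ε < dF T f p.1 p.2} = 1

/-!
Everything rests on the pointwise ergodic theorem for ergodic `ℤ^d`-actions. The Vitali covering
lemma for boxes, transferred to `X` along orbits, gives a weak-type maximal inequality; hence the
set of functions whose box averages converge almost everywhere to their mean is closed in `L¹`.
This set contains the constants and the coboundaries `h - h ∘ T i` (whose averages telescope up to
boundary terms), and by ergodicity these span a dense subspace of `L²`.

Applied to `|f|²`, the theorem makes almost every point generic, and between generic points the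
defining averages of `dF` are bounded, so that `dF` satisfies the triangle inequality there. A ball
of radius `ε / 2` about a generic point then contains no two generic points at distance more than
`ε`, so under mean sensitivity it cannot have positive measure. Mean expansiveness is the same
nullness of balls, by Fubini.
-/

open scoped BigOperators ENNReal Pointwise Topology

section Boxes

variable {d : ℕ}

lemma mem_Fbox {n : ℕ} {v : Fin d → ℤ} : v ∈ Fbox d n ↔ ∀ k, 0 ≤ v k ∧ v k < n := by
  simp only [Fbox, Fintype.mem_piFinset, Finset.mem_Icc, Int.le_sub_one_iff]

lemma card_Fbox (d n : ℕ) : #(Fbox d n) = n ^ d := by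
  simp [Fbox, Fintype.card_piFinset]

lemma norm_sum_sub_sum_add_le {G E : Type*} [AddGroup G] [DecidableEq G]
    [SeminormedAddCommGroup E] {a : G → E} {C : ℝ} (ha : ∀ j, ‖a j‖ ≤ C) (i : G) (s : Finset G) :
    ‖∑ j ∈ s, a j - ∑ j ∈ s, a (i + j)‖ ≤ 2 * C * #(s \ (i +ᵥ s)) := by
  have translate : ∑ j ∈ s, a (i + j) = ∑ j ∈ i +ᵥ s, a j :=
    (sum_image (g := (i + ·)) (add_right_injective i).injOn).symm
  have card_eq : #((i +ᵥ s) \ s) = #(s \ (i +ᵥ s)) :=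
    card_sdiff_comm (card_vadd_finset i s)
  calc ‖∑ j ∈ s, a j - ∑ j ∈ s, a (i + j)‖
      = ‖∑ j ∈ s \ (i +ᵥ s), a j - ∑ j ∈ (i +ᵥ s) \ s, a j‖ := by
        rw [translate, sum_sdiff_sub_sum_sdiff]
    _ ≤ #(s \ (i +ᵥ s)) * C + #((i +ᵥ s) \ s) * C :=
        (norm_sub_le _ _).trans <| add_le_add
          ((norm_sum_le_of_le _ fun j _ ↦ ha j).trans_eq (by rw [sum_const, nsmul_eq_mul]))
          ((norm_sum_le_of_le _ fun j _ ↦ ha j).trans_eq (by rw [sum_const, nsmul_eq_mul]))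
    _ = 2 * C * #(s \ (i +ᵥ s)) := by rw [card_eq]; ring

lemma card_Fbox_sdiff_vadd_le {i : Fin d → ℤ} {K : ℕ} (hK : ∀ k, |i k| ≤ K) (n : ℕ) :
    #(Fbox d n \ (i +ᵥ Fbox d n)) ≤ n ^ d - (n - 2 * K) ^ d := by
  set core := (fun _ ↦ (K : ℤ) : Fin d → ℤ) +ᵥ Fbox d (n - 2 * K) with hcore
  have core_subset : core ⊆ Fbox d n := by
    rintro _ hp
    obtain ⟨v, hv, rfl⟩ := mem_vadd_finset.1 hp
    refine mem_Fbox.2 fun k ↦ ?_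
    have := mem_Fbox.1 hv k
    simp only [vadd_eq_add, Pi.add_apply]
    omega
  have core_subset_vadd : core ⊆ i +ᵥ Fbox d n := by
    rintro _ hp
    obtain ⟨v, hv, rfl⟩ := mem_vadd_finset.1 hp
    refine mem_vadd_finset.2 ⟨(fun _ ↦ (K : ℤ)) + v - i, mem_Fbox.2 fun k ↦ ?_, by simp⟩
    have := mem_Fbox.1 hv k
    have := abs_le.1 (hK k)
    simp only [Pi.sub_apply, Pi.add_apply]
    omega
  calc #(Fbox d n \ (i +ᵥ Fbox d n))
      ≤ #(Fbox d n \ core) := card_le_card (sdiff_subset_sdiff subset_rfl core_subset_vadd)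
    _ = n ^ d - (n - 2 * K) ^ d := by
        rw [card_sdiff_of_subset core_subset, hcore, card_vadd_finset, card_Fbox, card_Fbox]

lemma tendsto_natCast_sub_div (c : ℕ) :
    Tendsto (fun n : ℕ ↦ ((n - c : ℕ) : ℝ) / n) atTop (𝓝 1) := by
  rw [← tendsto_add_atTop_iff_nat c]
  simpa only [Nat.add_sub_cancel, Nat.cast_add] using tendsto_natCast_div_add_atTop (c : ℝ)

lemma tendsto_card_Fbox_sdiff_vadd_div (i : Fin d → ℤ) :
    Tendsto (fun n ↦ (#(Fbox d n \ (i +ᵥ Fbox d n)) : ℝ) / #(Fbox d n)) atTop (𝓝 0) := by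
  obtain ⟨K, hK⟩ : ∃ K : ℕ, ∀ k, |i k| ≤ K := by
    obtain ⟨b, hb⟩ := Finite.exists_le fun k ↦ (i k).natAbs
    exact ⟨b, fun k ↦ by rw [Int.abs_eq_natAbs]; exact_mod_cast hb k⟩
  have lim : Tendsto (fun n : ℕ ↦ 1 - (((n - 2 * K : ℕ) : ℝ) / n) ^ d) atTop (𝓝 0) := by
    simpa using ((tendsto_natCast_sub_div (2 * K)).pow d).const_sub 1
  refine squeeze_zero' (.of_forall fun n ↦ by positivity) ?_ lim
  filter_upwards [eventually_gt_atTop 0] with n hn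
  have hn' : (0 : ℝ) < (n : ℝ) ^ d := by positivity
  have bound : (#(Fbox d n \ (i +ᵥ Fbox d n)) : ℝ) ≤ (n : ℝ) ^ d - ((n - 2 * K : ℕ) : ℝ) ^ d := by
    have := card_Fbox_sdiff_vadd_le hK n
    have pow_le : (n - 2 * K) ^ d ≤ n ^ d := Nat.pow_le_pow_left (Nat.sub_le _ _) d
    exact_mod_cast (Nat.cast_le (α := ℝ).2 this).trans_eq (Nat.cast_sub pow_le)
  calc (#(Fbox d n \ (i +ᵥ Fbox d n)) : ℝ) / #(Fbox d n)
      ≤ ((n : ℝ) ^ d - ((n - 2 * K : ℕ) : ℝ) ^ d) / (n : ℝ) ^ d := by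
        rw [card_Fbox, Nat.cast_pow]; gcongr
    _ = 1 - (((n - 2 * K : ℕ) : ℝ) / n) ^ d := by rw [sub_div, div_self hn'.ne', div_pow]

end Boxes

section MaximalInequality

variable {d : ℕ}

-- A box meeting one of at least half its size has its corner in a box three times as large.
lemma exists_pairwiseDisjoint_vadd_Fbox (J : Finset (Fin d → ℤ)) {n : (Fin d → ℤ) → ℕ}
    (hn : ∀ j ∈ J, (Fbox d (n j)).Nonempty) :
    ∃ U ⊆ J, (U : Set (Fin d → ℤ)).PairwiseDisjoint (fun b ↦ b +ᵥ Fbox d (n b)) ∧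
      #J ≤ 3 ^ d * ∑ b ∈ U, #(Fbox d (n b)) := by
  obtain ⟨u, huJ, hdisj, hcov⟩ := Vitali.exists_disjoint_subfamily_covering_enlargement
    (fun j ↦ ((j +ᵥ Fbox d (n j) : Finset (Fin d → ℤ)) : Set (Fin d → ℤ))) (J : Set (Fin d → ℤ))
    (fun j ↦ (n j : ℝ)) 2 one_lt_two (fun _ _ ↦ Nat.cast_nonneg _) ((J.sup n : ℕ) : ℝ)
    (fun j hj ↦ Nat.cast_le.2 (le_sup (f := n) hj)) (fun j hj ↦ (hn j hj).vadd_finset)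
  lift u to Finset (Fin d → ℤ) using J.finite_toSet.subset huJ
  have cover : J ⊆ u.biUnion fun b ↦ (b - fun _ ↦ 2 * (n b : ℤ)) +ᵥ Fbox d (3 * n b) := by
    intro j hj
    obtain ⟨b, hb, ⟨p, hpj, hpb⟩, hle⟩ := hcov j hj
    obtain ⟨v, hv, rfl⟩ := mem_vadd_finset.1 (mem_coe.1 hpj)
    obtain ⟨w, hw, hwv⟩ := mem_vadd_finset.1 (mem_coe.1 hpb)
    have hle' : n j ≤ 2 * n b := by exact_mod_cast hle
    refine mem_biUnion.2 ⟨b, hb, mem_vadd_finset.2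
      ⟨j - (b - fun _ ↦ 2 * (n b : ℤ)), mem_Fbox.2 fun k ↦ ?_, by simp⟩⟩
    have hvk := mem_Fbox.1 hv k
    have hwk := mem_Fbox.1 hw k
    have hwvk : b k + w k = j k + v k := congrFun hwv k
    simp only [Pi.sub_apply]
    omega
  refine ⟨u, mod_cast huJ, fun x hx y hy hxy ↦
    disjoint_coe.1 (hdisj hx hy hxy), ?_⟩
  calc #J ≤ ∑ b ∈ u, #((b - fun _ ↦ 2 * (n b : ℤ)) +ᵥ Fbox d (3 * n b)) :=
        (card_le_card cover).trans card_biUnion_le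
    _ = 3 ^ d * ∑ b ∈ u, #(Fbox d (n b)) := by
        simp only [card_vadd_finset, card_Fbox, mul_pow, mul_sum]

lemma mul_card_le_sum_Fbox_add {a : (Fin d → ℤ) → ℝ≥0∞} {L : ℝ≥0∞} {M N : ℕ}
    {J : Finset (Fin d → ℤ)} (hJ : J ⊆ Fbox d M)
    (h : ∀ j ∈ J, ∃ n ≤ N, L * #(Fbox d n) < ∑ i ∈ Fbox d n, a (i + j)) :
    L * #J ≤ 3 ^ d * ∑ i ∈ Fbox d (M + N), a i := by
  choose! n hnN hn using h
  have nonempty : ∀ j ∈ J, (Fbox d (n j)).Nonempty := fun j hj ↦ by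
    rw [nonempty_iff_ne_empty]
    intro h_empty
    simpa [h_empty] using hn j hj
  obtain ⟨U, hUJ, hdisj, hcard⟩ := exists_pairwiseDisjoint_vadd_Fbox J nonempty
  have subset_box : (U.biUnion fun b ↦ b +ᵥ Fbox d (n b)) ⊆ Fbox d (M + N) := by
    refine biUnion_subset.2 fun b hb p hp ↦ mem_Fbox.2 fun k ↦ ?_
    obtain ⟨v, hv, rfl⟩ := mem_vadd_finset.1 hp
    have := mem_Fbox.1 hv k
    have := mem_Fbox.1 (hJ (hUJ hb)) k
    have := hnN b (hUJ hb)
    simp only [vadd_eq_add, Pi.add_apply]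
    omega
  have translate : ∀ b, ∑ i ∈ Fbox d (n b), a (i + b) = ∑ i ∈ b +ᵥ Fbox d (n b), a i := fun b ↦ by
    simp only [add_comm _ b]
    exact (sum_image (g := (b + ·)) (add_right_injective b).injOn).symm
  calc L * #J ≤ L * ((3 ^ d * ∑ b ∈ U, #(Fbox d (n b)) : ℕ) : ℝ≥0∞) := by gcongr
    _ = 3 ^ d * ∑ b ∈ U, L * #(Fbox d (n b)) := by push_cast; rw [← mul_sum]; ring
    _ ≤ 3 ^ d * ∑ b ∈ U, ∑ i ∈ b +ᵥ Fbox d (n b), a i := by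
        gcongr with b hb
        exact (hn b (hUJ hb)).le.trans_eq (translate b)
    _ = 3 ^ d * ∑ i ∈ U.biUnion fun b ↦ b +ᵥ Fbox d (n b), a i := by rw [sum_biUnion hdisj]
    _ ≤ 3 ^ d * ∑ i ∈ Fbox d (M + N), a i := by gcongr

lemma le_of_forall_mul_pow_le_mul_add_pow {A B : ℝ≥0∞} {N : ℕ}
    (h : ∀ M : ℕ, A * (M : ℝ≥0∞) ^ d ≤ B * ((M + N : ℕ) : ℝ≥0∞) ^ d) : A ≤ B := by
  have lim : Tendsto (fun M : ℕ ↦ B * (1 + N * (M : ℝ≥0∞)⁻¹) ^ d) atTop (𝓝 B) := by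
    have ratio : Tendsto (fun M : ℕ ↦ 1 + N * (M : ℝ≥0∞)⁻¹) atTop (𝓝 1) := by
      simpa using (ENNReal.Tendsto.const_mul ENNReal.tendsto_inv_nat_nhds_zero
        (.inr (ENNReal.natCast_ne_top N))).const_add 1
    simpa using ENNReal.Tendsto.const_mul (ENNReal.Tendsto.pow (n := d) ratio) (a := B)
      (.inl (by simp))
  refine ge_of_tendsto lim ?_
  filter_upwards [eventually_gt_atTop 0] with M hM
  have inv_mul : (M : ℝ≥0∞) * (M : ℝ≥0∞)⁻¹ = 1 :=
    ENNReal.mul_inv_cancel (by exact_mod_cast hM.ne') (ENNReal.natCast_ne_top M)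
  calc A = A * (M : ℝ≥0∞) ^ d * (M : ℝ≥0∞)⁻¹ ^ d := by
        rw [mul_assoc, ← mul_pow, inv_mul, one_pow, mul_one]
    _ ≤ B * ((M + N : ℕ) : ℝ≥0∞) ^ d * (M : ℝ≥0∞)⁻¹ ^ d := mul_le_mul_left (h M) _
    _ = B * (1 + N * (M : ℝ≥0∞)⁻¹) ^ d := by
        rw [mul_assoc, ← mul_pow, Nat.cast_add, add_mul, inv_mul]

lemma lintegral_const_mul_sum_comp {ι : Type*} [MeasurableSpace X] {μ : Measure X}
    {T : ι → X → X} (hT : ∀ j, MeasurePreserving (T j) μ μ) {G : X → ℝ≥0∞}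
    (hG : AEMeasurable G μ) (c : ℝ≥0∞) (s : Finset ι) :
    ∫⁻ x, c * ∑ j ∈ s, G (T j x) ∂μ = c * (#s * ∫⁻ x, G x ∂μ) := by
  have hGT (j : ι) : AEMeasurable (fun x ↦ G (T j x)) μ :=
    hG.comp_quasiMeasurePreserving (hT j).quasiMeasurePreserving
  have lintegral_comp (j : ι) : ∫⁻ x, G (T j x) ∂μ = ∫⁻ x, G x ∂μ := by
    rw [← lintegral_map' ((hT j).map_eq.symm ▸ hG) (hT j).aemeasurable, (hT j).map_eq]
  rw [lintegral_const_mul'' _ (Finset.aemeasurable_fun_sum _ fun j _ ↦ hGT j),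
    lintegral_finsetSum' _ fun j _ ↦ hGT j]
  simp only [lintegral_comp, sum_const, nsmul_eq_mul]

variable [MeasurableSpace X] {μ : Measure X} {T : (Fin d → ℤ) → X → X}
  (hT : ∀ j, MeasurePreserving (T j) μ μ) (hTadd : ∀ i j, T (i + j) = T i ∘ T j)

include hT hTadd

-- Transference: the inequality on `ℤ^d` is applied along each orbit and integrated.
lemma mul_measure_exists_le_lt_sum_Fbox_le {G : X → ℝ≥0∞} (hG : AEMeasurable G μ) (L : ℝ≥0∞)
    (N : ℕ) :
    L * μ {x | ∃ n ≤ N, L * #(Fbox d n) < ∑ i ∈ Fbox d n, G (T i x)} ≤ 3 ^ d * ∫⁻ x, G x ∂μ := by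
  set E := {x | ∃ n ≤ N, L * #(Fbox d n) < ∑ i ∈ Fbox d n, G (T i x)} with hE
  have measurable_E : NullMeasurableSet E μ := by
    have E_eq : E = ⋃ n ≤ N, {x | L * #(Fbox d n) < ∑ i ∈ Fbox d n, G (T i x)} := by
      ext x
      simp [hE]
    rw [E_eq]
    exact .iUnion fun n ↦ .iUnion fun _ ↦ nullMeasurableSet_lt aemeasurable_const
      (Finset.aemeasurable_fun_sum _ fun i _ ↦
        hG.comp_quasiMeasurePreserving (hT i).quasiMeasurePreserving)
  have measurable_indicator : AEMeasurable (E.indicator (1 : X → ℝ≥0∞)) μ :=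
    aemeasurable_one.indicator₀ measurable_E
  have orbitwise (M : ℕ) (x : X) : L * ∑ j ∈ Fbox d M, E.indicator (1 : X → ℝ≥0∞) (T j x) ≤
      3 ^ d * ∑ i ∈ Fbox d (M + N), G (T i x) := by
    simp only [Set.indicator_apply, Pi.one_apply]
    rw [sum_boole]
    refine mul_card_le_sum_Fbox_add (filter_subset _ _) fun j hj ↦ ?_
    simpa only [hE, Set.mem_ofPred_eq, hTadd, Function.comp_apply] using (mem_filter.1 hj).2
  refine le_of_forall_mul_pow_le_mul_add_pow (d := d) (N := N) fun M ↦ ?_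
  calc L * μ E * (M : ℝ≥0∞) ^ d
      = ∫⁻ x, L * ∑ j ∈ Fbox d M, E.indicator (1 : X → ℝ≥0∞) (T j x) ∂μ := by
        rw [lintegral_const_mul_sum_comp hT measurable_indicator,
          lintegral_indicator_one₀ measurable_E, card_Fbox, Nat.cast_pow]
        ring
    _ ≤ ∫⁻ x, 3 ^ d * ∑ i ∈ Fbox d (M + N), G (T i x) ∂μ := lintegral_mono (orbitwise M)
    _ = 3 ^ d * (∫⁻ x, G x ∂μ) * ((M + N : ℕ) : ℝ≥0∞) ^ d := by
        rw [lintegral_const_mul_sum_comp hT hG, card_Fbox, Nat.cast_pow]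
        ring

lemma mul_measure_exists_lt_sum_Fbox_le {G : X → ℝ≥0∞} (hG : AEMeasurable G μ) (L : ℝ≥0∞) :
    L * μ {x | ∃ n, L * #(Fbox d n) < ∑ i ∈ Fbox d n, G (T i x)} ≤ 3 ^ d * ∫⁻ x, G x ∂μ := by
  have union : {x | ∃ n, L * #(Fbox d n) < ∑ i ∈ Fbox d n, G (T i x)} =
      ⋃ N, {x | ∃ n ≤ N, L * #(Fbox d n) < ∑ i ∈ Fbox d n, G (T i x)} := by
    ext x
    simpa using ⟨fun ⟨n, hn⟩ ↦ ⟨n, n, le_rfl, hn⟩, fun ⟨_, n, _, hn⟩ ↦ ⟨n, hn⟩⟩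
  have mono : Monotone fun N ↦ {x | ∃ n ≤ N, L * #(Fbox d n) < ∑ i ∈ Fbox d n, G (T i x)} :=
    fun _ _ hN _ ⟨n, hn, hlt⟩ ↦ ⟨n, hn.trans hN, hlt⟩
  rw [union, mono.measure_iUnion, ENNReal.mul_iSup]
  exact iSup_le fun N ↦ mul_measure_exists_le_lt_sum_Fbox_le hT hTadd hG L N

lemma mul_measure_exists_lt_enorm_expect_Fbox_le {h : X → ℝ} (hh : AEStronglyMeasurable h μ)
    {L : ℝ≥0∞} : L * μ {x | ∃ n, L < ‖𝔼 j ∈ Fbox d n, h (T j x)‖ₑ} ≤ 3 ^ d * eLpNorm h 1 μ := by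
  rw [eLpNorm_one_eq_lintegral_enorm]
  have subset : {x | ∃ n, L < ‖𝔼 j ∈ Fbox d n, h (T j x)‖ₑ} ⊆
      {x | ∃ n, L * #(Fbox d n) < ∑ j ∈ Fbox d n, ‖h (T j x)‖ₑ} := by
    rintro x ⟨n, hn⟩
    have card_ne_zero : #(Fbox d n) ≠ 0 := fun h0 ↦ by
      simp [expect_eq_sum_div_card, h0] at hn
    refine ⟨n, ?_⟩
    calc L * #(Fbox d n) < ‖𝔼 j ∈ Fbox d n, h (T j x)‖ₑ * #(Fbox d n) := by
          gcongr
          exact ENNReal.natCast_ne_top _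
      _ = ‖∑ j ∈ Fbox d n, h (T j x)‖ₑ := by
          rw [← card_mul_expect, enorm_mul, Real.enorm_natCast, mul_comm]
      _ ≤ ∑ j ∈ Fbox d n, ‖h (T j x)‖ₑ := enorm_sum_le _ _
  calc L * μ {x | ∃ n, L < ‖𝔼 j ∈ Fbox d n, h (T j x)‖ₑ}
      ≤ L * μ {x | ∃ n, L * #(Fbox d n) < ∑ j ∈ Fbox d n, ‖h (T j x)‖ₑ} := by gcongr
    _ ≤ 3 ^ d * ∫⁻ x, ‖h x‖ₑ ∂μ := mul_measure_exists_lt_sum_Fbox_le hT hTadd hh.enorm L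

end MaximalInequality

section ErgodicAverages

variable {d : ℕ}

lemma tendsto_expect_Fbox_sub_add {a : (Fin d → ℤ) → ℝ} {C : ℝ} (ha : ∀ j, ‖a j‖ ≤ C)
    (i : Fin d → ℤ) : Tendsto (fun n ↦ 𝔼 j ∈ Fbox d n, (a j - a (i + j))) atTop (𝓝 0) := by
  have lim := (tendsto_card_Fbox_sdiff_vadd_div i).const_mul (2 * C)
  rw [mul_zero] at lim
  refine squeeze_zero_norm (fun n ↦ ?_) lim
  rw [expect_eq_sum_div_card, sum_sub_distrib, norm_div, Real.norm_natCast, ← mul_div_assoc]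
  gcongr
  exact norm_sum_sub_sum_add_le ha i (Fbox d n)

variable [MeasurableSpace X]

lemma integral_sub_comp {μ : Measure X} {S : X → X} (hS : MeasurePreserving S μ μ) {h : X → ℝ}
    (hh : Integrable h μ) : ∫ x, (h x - h (S x)) ∂μ = 0 := by
  have comp_eq : ∫ x, h (S x) ∂μ = ∫ x, h x ∂μ := by
    rw [← integral_map hS.aemeasurable (hS.map_eq.symm ▸ hh.aestronglyMeasurable), hS.map_eq]
  rw [integral_sub hh (g := fun x ↦ h (S x)) (hS.integrable_comp_of_integrable hh), comp_eq,
    sub_self]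

/-- The box averages of `g` along the action `T` converge `μ`-almost everywhere to the mean of
`g`: the conclusion of the pointwise ergodic theorem for an ergodic action. -/
def HasErgodicAverages (μ : Measure X) (T : (Fin d → ℤ) → X → X) (g : X → ℝ) : Prop :=
  ∀ᵐ x ∂μ, Tendsto (fun n ↦ 𝔼 j ∈ Fbox d n, g (T j x)) atTop (𝓝 (∫ y, g y ∂μ))

namespace HasErgodicAverages

variable {μ : Measure X} {T : (Fin d → ℤ) → X → X} {g h v : X → ℝ}

lemma congr_ae (hT : ∀ j, MeasurePreserving (T j) μ μ) (hg : HasErgodicAverages μ T g)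
    (hgh : g =ᵐ[μ] h) : HasErgodicAverages μ T h := by
  have orbit_eq : ∀ᵐ x ∂μ, ∀ j, g (T j x) = h (T j x) :=
    ae_all_iff.2 fun j ↦ (hT j).quasiMeasurePreserving.ae_eq_comp hgh
  filter_upwards [orbit_eq, hg] with x heq hx
  simpa only [heq, integral_congr_ae hgh] using hx

lemma add (hg : HasErgodicAverages μ T g) (hh : HasErgodicAverages μ T h) (hgi : Integrable g μ)
    (hhi : Integrable h μ) : HasErgodicAverages μ T (g + h) := by
  filter_upwards [hg, hh] with x hgx hhx
  simpa only [Pi.add_apply, expect_add_distrib, integral_add hgi hhi] using hgx.add hhx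

lemma const_smul (hg : HasErgodicAverages μ T g) (c : ℝ) : HasErgodicAverages μ T (c • g) := by
  filter_upwards [hg] with x hgx
  simpa only [Pi.smul_apply, smul_eq_mul, ← mul_expect, integral_const_mul] using hgx.const_mul c

lemma const [IsProbabilityMeasure μ] (c : ℝ) : HasErgodicAverages μ T fun _ ↦ c := by
  refine .of_forall fun x ↦ ?_
  rw [integral_const, probReal_univ, one_smul]
  refine tendsto_const_nhds.congr' ?_
  filter_upwards [eventually_gt_atTop 0] with n hn
  have nonempty : (Fbox d n).Nonempty := by
    rw [← card_pos, card_Fbox]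
    positivity
  exact (expect_const nonempty c).symm

variable (hT : ∀ j, MeasurePreserving (T j) μ μ) (hTadd : ∀ i j, T (i + j) = T i ∘ T j)

include hT hTadd

lemma sub_comp_of_bounded [IsFiniteMeasure μ] (hh : AEStronglyMeasurable h μ) {C : ℝ}
    (hC : ∀ x, ‖h x‖ ≤ C) (i : Fin d → ℤ) : HasErgodicAverages μ T fun x ↦ h x - h (T i x) := by
  refine .of_forall fun x ↦ ?_
  rw [integral_sub_comp (hT i) (.of_bound hh C (.of_forall hC))]
  simpa only [hTadd, Function.comp_apply] using
    tendsto_expect_Fbox_sub_add (a := fun j ↦ h (T j x)) (fun j ↦ hC _) i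

lemma mul_measure_not_eventually_dist_lt_le (hg : Integrable g μ) (hv : Integrable v μ)
    (hvT : HasErgodicAverages μ T v) {η : NNReal} (hη : 0 < η)
    (hgv : eLpNorm (g - v) 1 μ ≤ η) :
    η * μ {x | ¬∀ᶠ n in atTop, dist (𝔼 j ∈ Fbox d n, g (T j x)) (∫ y, g y ∂μ) < 3 * η} ≤
      3 ^ d * eLpNorm (g - v) 1 μ := by
  have dist_integral : dist (∫ y, v y ∂μ) (∫ y, g y ∂μ) ≤ η := by
    have enorm_le : ‖∫ y, (g - v) y ∂μ‖ₑ ≤ η :=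
      (enorm_integral_le_lintegral_enorm _).trans (eLpNorm_one_eq_lintegral_enorm.symm.trans_le hgv)
    rw [dist_comm, dist_eq_norm, ← integral_sub hg hv]
    exact_mod_cast enorm_le_coe.1 enorm_le
  have ae_subset : ∀ᵐ x ∂μ,
      (¬∀ᶠ n in atTop, dist (𝔼 j ∈ Fbox d n, g (T j x)) (∫ y, g y ∂μ) < 3 * η) →
      ∃ n, (η : ℝ≥0∞) < ‖𝔼 j ∈ Fbox d n, (g - v) (T j x)‖ₑ := by
    filter_upwards [hvT] with x hx
    contrapose!
    intro hle
    filter_upwards [Metric.tendsto_nhds.1 hx η (NNReal.coe_pos.2 hη)] with n hn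
    have dist_expect : dist (𝔼 j ∈ Fbox d n, g (T j x)) (𝔼 j ∈ Fbox d n, v (T j x)) ≤ η := by
      have := hle n
      simp only [Pi.sub_apply, expect_sub_distrib, enorm_le_coe] at this
      exact_mod_cast (dist_eq_norm _ _).trans_le this
    linarith [dist_triangle4 (𝔼 j ∈ Fbox d n, g (T j x)) (𝔼 j ∈ Fbox d n, v (T j x))
      (∫ y, v y ∂μ) (∫ y, g y ∂μ)]
  calc _ ≤ η * μ {x | ∃ n, (η : ℝ≥0∞) < ‖𝔼 j ∈ Fbox d n, (g - v) (T j x)‖ₑ} :=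
        mul_le_mul_right (measure_mono_ae ae_subset) _
    _ ≤ 3 ^ d * eLpNorm (g - v) 1 μ := mul_measure_exists_lt_enorm_expect_Fbox_le hT hTadd
        (hg.sub hv).aestronglyMeasurable

lemma of_approx (hg : Integrable g μ)
    (happrox : ∀ δ : ℝ≥0∞, δ ≠ 0 →
      ∃ v, Integrable v μ ∧ HasErgodicAverages μ T v ∧ eLpNorm (g - v) 1 μ ≤ δ) :
    HasErgodicAverages μ T g := by
  have eventually_lt {η : NNReal} (hη : 0 < η) : ∀ᵐ x ∂μ,
      ∀ᶠ n in atTop, dist (𝔼 j ∈ Fbox d n, g (T j x)) (∫ y, g y ∂μ) < 3 * η := by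
    have mul_measure_le : η * μ {x | ¬∀ᶠ n in atTop,
        dist (𝔼 j ∈ Fbox d n, g (T j x)) (∫ y, g y ∂μ) < 3 * η} ≤ 0 := by
      have lim : Tendsto (fun δ : ℝ≥0∞ ↦ 3 ^ d * δ) (𝓝[>] 0) (𝓝 0) := by
        simpa using (ENNReal.Tendsto.const_mul tendsto_id (.inr (by simp))).mono_left
          (nhdsWithin_le_nhds (a := (0 : ℝ≥0∞)))
      refine ge_of_tendsto lim ?_
      filter_upwards [Ioc_mem_nhdsGT (ENNReal.coe_pos.2 hη)] with δ hδ
      obtain ⟨v, hv, hvT, hgv⟩ := happrox δ hδ.1.ne'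
      exact (mul_measure_not_eventually_dist_lt_le hT hTadd hg hv hvT hη (hgv.trans hδ.2)).trans
        (by gcongr)
    simpa [hη.ne', ae_iff] using mul_measure_le
  have eventually_lt_inv : ∀ᵐ x ∂μ, ∀ m : ℕ,
      ∀ᶠ n in atTop, dist (𝔼 j ∈ Fbox d n, g (T j x)) (∫ y, g y ∂μ) < 1 / (m + 1) := by
    refine ae_all_iff.2 fun m ↦ ?_
    simpa [mul_div_cancel₀] using eventually_lt (η := 1 / (m + 1) / 3) (by positivity)
  filter_upwards [eventually_lt_inv] with x hx
  simpa using (Metric.nhds_basis_ball_inv_nat_succ.tendsto_right_iff).2 fun m _ ↦ hx m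

lemma sub_comp [IsFiniteMeasure μ] (hh : Integrable h μ) (i : Fin d → ℤ) :
    HasErgodicAverages μ T fun x ↦ h x - h (T i x) := by
  refine of_approx hT hTadd (hh.sub ((hT i).integrable_comp_of_integrable hh)) fun δ hδ ↦ ?_
  obtain ⟨s, hs, -⟩ := (memLp_one_iff_integrable.2 hh).exists_simpleFunc_eLpNorm_sub_lt
    ENNReal.one_ne_top (ENNReal.half_pos hδ).ne'
  obtain ⟨C, hC⟩ := s.exists_forall_norm_le
  have hsi : Integrable s μ := .of_bound s.aestronglyMeasurable C (.of_forall hC)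
  refine ⟨fun x ↦ s x - s (T i x), hsi.sub ((hT i).integrable_comp_of_integrable hsi),
    sub_comp_of_bounded hT hTadd s.aestronglyMeasurable hC i, ?_⟩
  have rearrange : (fun x ↦ h x - h (T i x)) - (fun x ↦ s x - s (T i x)) =
      (h - ⇑s) - (h - ⇑s) ∘ T i := by
    ext x
    simp only [Pi.sub_apply, Function.comp_apply]
    ring
  have aesm : AEStronglyMeasurable (h - ⇑s) μ := (hh.sub hsi).aestronglyMeasurable
  calc eLpNorm ((fun x ↦ h x - h (T i x)) - fun x ↦ s x - s (T i x)) 1 μ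
      ≤ eLpNorm (h - ⇑s) 1 μ + eLpNorm ((h - ⇑s) ∘ T i) 1 μ := by
        rw [rearrange]
        exact eLpNorm_sub_le aesm (aesm.comp_measurePreserving (hT i)) le_rfl
    _ ≤ δ / 2 + δ / 2 := by
        rw [eLpNorm_comp_measurePreserving aesm (hT i)]
        gcongr
    _ = δ := ENNReal.add_halves δ

end HasErgodicAverages

end ErgodicAverages

section Ergodicity

variable {G : Type*} [AddGroup G] [Countable G] [MeasurableSpace X] {μ : Measure X}
  {T : G → X → X} (hT : ∀ j, MeasurePreserving (T j) μ μ) (hTadd : ∀ i j, T (i + j) = T i ∘ T j)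
  (herg : ∀ A : Set X, MeasurableSet A → (∀ j, T j ⁻¹' A = A) → μ A = 0 ∨ μ A = 1)

include hT hTadd herg

lemma measure_eq_zero_or_one_of_ae_invariant {A : Set X} (hA : MeasurableSet A)
    (hinv : ∀ j, ∀ᵐ x ∂μ, T j x ∈ A ↔ x ∈ A) : μ A = 0 ∨ μ A = 1 := by
  have invariant_core (i : G) : T i ⁻¹' (⋂ j, T j ⁻¹' A) = ⋂ j, T j ⁻¹' A := by
    simp only [Set.preimage_iInter, ← Set.preimage_comp, ← hTadd]
    exact (Equiv.addRight i).surjective.iInter_comp fun j ↦ T j ⁻¹' A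
  have core_ae_eq : (⋂ j, T j ⁻¹' A : Set X) =ᵐ[μ] A := by
    rw [eventuallyEq_set]
    filter_upwards [ae_all_iff.2 hinv] with x hx
    simp [hx]
  rw [← measure_congr core_ae_eq]
  exact herg _ (.iInter fun j ↦ (hT j).measurable hA) invariant_core

lemma ae_eq_const_of_ae_invariant [IsProbabilityMeasure μ] {Y : Type*} [Nonempty Y]
    [MeasurableSpace Y] [HasCountableSeparatingOn Y MeasurableSet Set.univ] {ψ : X → Y}
    (hψ : Measurable ψ) (hinv : ∀ j, ψ ∘ T j =ᵐ[μ] ψ) : ∃ c, ψ =ᵐ[μ] fun _ ↦ c := by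
  refine exists_eventuallyEq_const_of_forall_separating MeasurableSet fun U hU ↦ ?_
  have zero_or_one := measure_eq_zero_or_one_of_ae_invariant hT hTadd herg (hψ hU) fun j ↦ by
    filter_upwards [hinv j] with x hx
    exact iff_of_eq (congrArg (· ∈ U) hx)
  rcases zero_or_one with h | h
  · exact .inr (measure_eq_zero_iff_ae_notMem.1 h)
  · exact .inl ((mem_ae_iff_prob_eq_one (hψ hU)).2 h)

end Ergodicity

section PointwiseErgodicTheorem

lemma map_eq_self_of_inner_sub_map {E : Type*} [NormedAddCommGroup E]
    [InnerProductSpace ℝ E] (U : E →ₗᵢ[ℝ] E) {x : E} (hx : inner ℝ (x - U x) x = 0) :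
    U x = x := by
  refine eq_of_norm_le_re_inner_eq_norm_sq (𝕜 := ℝ) (U.norm_map x).le ?_
  rw [inner_sub_left, real_inner_self_eq_norm_sq] at hx
  exact (sub_eq_zero.1 hx).symm

variable {d : ℕ} [MeasurableSpace X] {μ : Measure X} [IsProbabilityMeasure μ]
  {T : (Fin d → ℤ) → X → X} (hT : ∀ j, MeasurePreserving (T j) μ μ)

/-- The subspace of `L²(μ)` on which the pointwise ergodic theorem holds. -/
def ergodicAveragesSubmodule : Submodule ℝ (Lp ℝ 2 μ) where
  carrier := {w | HasErgodicAverages μ T w}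
  add_mem' {v w} hv hw := (hv.add hw ((Lp.memLp v).integrable one_le_two)
    ((Lp.memLp w).integrable one_le_two)).congr_ae hT (Lp.coeFn_add v w).symm
  zero_mem' := (HasErgodicAverages.const 0).congr_ae hT (Lp.coeFn_zero ℝ 2 μ).symm
  smul_mem' c w hw := (hw.const_smul c).congr_ae hT (Lp.coeFn_smul c w).symm

variable (hTadd : ∀ i j, T (i + j) = T i ∘ T j)

include hTadd in
lemma sub_compMeasurePreserving_mem_ergodicAveragesSubmodule (h : Lp ℝ 2 μ) (i : Fin d → ℤ) :
    h - Lp.compMeasurePreservingₗᵢ ℝ (T i) (hT i) h ∈ ergodicAveragesSubmodule hT := by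
  have ae_eq : (fun x ↦ h x - h (T i x)) =ᵐ[μ]
      ⇑(h - Lp.compMeasurePreservingₗᵢ ℝ (T i) (hT i) h) :=
    ((EventuallyEq.refl _ h).sub (Lp.coeFn_compMeasurePreserving h (hT i)).symm).trans
      (Lp.coeFn_sub _ _).symm
  exact (HasErgodicAverages.sub_comp hT hTadd ((Lp.memLp h).integrable one_le_two) i).congr_ae
    hT ae_eq

variable (herg : ∀ A : Set X, MeasurableSet A → (∀ j, T j ⁻¹' A = A) → μ A = 0 ∨ μ A = 1)

include hT hTadd herg

-- A function orthogonal to all coboundaries is invariant, hence constant, hence itself in the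
-- subspace.
lemma topologicalClosure_ergodicAveragesSubmodule :
    (ergodicAveragesSubmodule hT).topologicalClosure = ⊤ := by
  rw [Submodule.topologicalClosure_eq_top_iff, Submodule.eq_bot_iff]
  intro ψ hψ
  have invariant (i : Fin d → ℤ) : Lp.compMeasurePreservingₗᵢ ℝ (T i) (hT i) ψ = ψ :=
    map_eq_self_of_inner_sub_map _ <| (Submodule.mem_orthogonal _ _).1 hψ _
      (sub_compMeasurePreserving_mem_ergodicAveragesSubmodule hT hTadd ψ i)
  obtain ⟨c, hc⟩ := ae_eq_const_of_ae_invariant hT hTadd herg (Lp.stronglyMeasurable ψ).measurable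
    fun i ↦ (Lp.coeFn_compMeasurePreserving ψ (hT i)).symm.trans
      (.of_eq (congrArg (⇑) (invariant i)))
  have hψ_mem : ψ ∈ ergodicAveragesSubmodule hT := (HasErgodicAverages.const c).congr_ae hT hc.symm
  exact (inner_self_eq_zero (𝕜 := ℝ)).1 ((Submodule.mem_orthogonal _ _).1 hψ ψ hψ_mem)

lemma hasErgodicAverages_of_memLp_two {g : X → ℝ} (hg : MemLp g 2 μ) :
    HasErgodicAverages μ T g := by
  refine .of_approx hT hTadd (hg.integrable one_le_two) fun δ hδ ↦ ?_
  have hg_closure : hg.toLp g ∈ closure (ergodicAveragesSubmodule hT : Set (Lp ℝ 2 μ)) := by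
    rw [← Submodule.topologicalClosure_coe,
      topologicalClosure_ergodicAveragesSubmodule hT hTadd herg]
    trivial
  obtain ⟨w, hw, hdist⟩ := EMetric.mem_closure_iff.1 hg_closure δ (pos_iff_ne_zero.2 hδ)
  refine ⟨w, (Lp.memLp w).integrable one_le_two, hw, ?_⟩
  calc eLpNorm (g - ⇑w) 1 μ
      ≤ eLpNorm (g - ⇑w) 2 μ := eLpNorm_le_eLpNorm_of_exponent_le one_le_two
        (hg.aestronglyMeasurable.sub (Lp.aestronglyMeasurable w))
    _ = edist (hg.toLp g) w := by
        rw [Lp.edist_def]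
        exact eLpNorm_congr_ae (hg.coeFn_toLp.symm.sub .rfl)
    _ ≤ δ := hdist.le

theorem hasErgodicAverages_of_integrable {g : X → ℝ} (hg : Integrable g μ) :
    HasErgodicAverages μ T g := by
  refine .of_approx hT hTadd hg fun δ hδ ↦ ?_
  obtain ⟨s, hs, hsi⟩ :=
    (memLp_one_iff_integrable.2 hg).exists_simpleFunc_eLpNorm_sub_lt ENNReal.one_ne_top hδ
  exact ⟨s, memLp_one_iff_integrable.1 hsi, hasErgodicAverages_of_memLp_two hT hTadd herg
    (s.memLp_of_isFiniteMeasure 2 μ), hs.le⟩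

lemma ae_genericSq {f : X → ℂ} (hf : MemLp f 2 μ) : ∀ᵐ x ∂μ, genericSq μ T f x := by
  simpa only [HasErgodicAverages, genericSq, expect_eq_sum_div_card] using
    hasErgodicAverages_of_integrable hT hTadd herg ((memLp_two_iff_integrable_sq_norm
      hf.aestronglyMeasurable).1 hf)

end PointwiseErgodicTheorem

section QuadraticMean

variable {ι E : Type*} [SeminormedAddCommGroup E]

/-- The quadratic mean of the norms `‖a j‖` over `j ∈ s`; the pseudometric `dF` is a limsup of
these, see `dF_eq_limsup`. -/
def quadraticMean (s : Finset ι) (a : ι → E) : ℝ :=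
  √((∑ j ∈ s, ‖a j‖ ^ 2) / #s)

lemma quadraticMean_nonneg (s : Finset ι) (a : ι → E) : 0 ≤ quadraticMean s a :=
  Real.sqrt_nonneg _

lemma quadraticMean_sub_comm (s : Finset ι) (a b : ι → E) :
    quadraticMean s (a - b) = quadraticMean s (b - a) := by
  simp only [quadraticMean, Pi.sub_apply, norm_sub_rev]

lemma quadraticMean_add_le (s : Finset ι) (a b : ι → E) :
    quadraticMean s (a + b) ≤ quadraticMean s a + quadraticMean s b := by
  have minkowski : √(∑ j ∈ s, (‖a j‖ + ‖b j‖) ^ 2) ≤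
      √(∑ j ∈ s, ‖a j‖ ^ 2) + √(∑ j ∈ s, ‖b j‖ ^ 2) := by
    simpa only [Real.rpow_two, ← Real.sqrt_eq_rpow] using
      Real.Lp_add_le_of_nonneg s one_le_two (fun j _ ↦ norm_nonneg (a j))
        (fun j _ ↦ norm_nonneg (b j))
  have sum_nonneg (u : ι → E) : 0 ≤ ∑ j ∈ s, ‖u j‖ ^ 2 := by positivity
  simp only [quadraticMean, Real.sqrt_div (sum_nonneg _), ← add_div]
  gcongr
  refine le_trans ?_ minkowski
  gcongr with j
  exact norm_add_le _ _

lemma quadraticMean_sub_le (s : Finset ι) (a b : ι → E) :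
    quadraticMean s (a - b) ≤ quadraticMean s a + quadraticMean s b := by
  simpa only [quadraticMean, Pi.neg_apply, norm_neg, sub_eq_add_neg] using
    quadraticMean_add_le s a (-b)

end QuadraticMean

section Pseudometric

variable {d : ℕ} {T : (Fin d → ℤ) → X → X} {f : X → ℂ}

lemma dF_eq_limsup (x y : X) : dF T f x y =
    limsup (fun n ↦ quadraticMean (Fbox d n) ((fun j ↦ f (T j x)) - fun j ↦ f (T j y))) atTop :=
  rfl

lemma dF_comm (x y : X) : dF T f x y = dF T f y x := by
  simp only [dF_eq_limsup, quadraticMean_sub_comm]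

lemma aemeasurable_limsup {Ω : Type*} [MeasurableSpace Ω] {ν : Measure Ω} {u : ℕ → Ω → ℝ}
    (hu : ∀ n, AEMeasurable (u n) ν) : AEMeasurable (fun ω ↦ limsup (u · ω) atTop) ν := by
  refine ⟨fun ω ↦ limsup (fun n ↦ (hu n).mk _ ω) atTop, .limsup fun n ↦ (hu n).measurable_mk, ?_⟩
  filter_upwards [ae_all_iff.2 fun n ↦ (hu n).ae_eq_mk] with ω hω
  simp only [hω]

lemma aemeasurable_dF {Ω : Type*} [MeasurableSpace Ω] {ν : Measure Ω} {u v : Ω → X}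
    (hu : ∀ j, AEMeasurable (fun ω ↦ f (T j (u ω))) ν)
    (hv : ∀ j, AEMeasurable (fun ω ↦ f (T j (v ω))) ν) :
    AEMeasurable (fun ω ↦ dF T f (u ω) (v ω)) ν :=
  aemeasurable_limsup fun _ ↦ ((Finset.aemeasurable_fun_sum _ fun j _ ↦
    ((hu j).sub (hv j)).norm.pow_const 2).div_const _).sqrt

variable [MeasurableSpace X] {μ : Measure X}

lemma isBoundedUnder_le_quadraticMean_sub {x y : X} (hx : genericSq μ T f x)
    (hy : genericSq μ T f y) : IsBoundedUnder (· ≤ ·) atTop fun n ↦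
      quadraticMean (Fbox d n) ((fun j ↦ f (T j x)) - fun j ↦ f (T j y)) :=
  (hx.sqrt.add hy.sqrt).isBoundedUnder_le.mono_le (.of_forall fun _ ↦ quadraticMean_sub_le _ _ _)

lemma dF_triangle {x y z : X} (hx : genericSq μ T f x) (hy : genericSq μ T f y)
    (hz : genericSq μ T f z) : dF T f x z ≤ dF T f x y + dF T f y z := by
  set D := fun (x y : X) (n : ℕ) ↦
    quadraticMean (Fbox d n) ((fun j ↦ f (T j x)) - fun j ↦ f (T j y)) with hD
  have triangle (n : ℕ) : D x z n ≤ (D x y + D y z) n := by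
    simpa only [hD, Pi.add_apply, sub_add_sub_cancel] using quadraticMean_add_le (Fbox d n)
      ((fun j ↦ f (T j x)) - fun j ↦ f (T j y)) ((fun j ↦ f (T j y)) - fun j ↦ f (T j z))
  have nonneg (u v : X) : IsBoundedUnder (· ≥ ·) atTop (D u v) :=
    isBoundedUnder_of ⟨0, fun _ ↦ quadraticMean_nonneg _ _⟩
  have bdd_xy : IsBoundedUnder (· ≤ ·) atTop (D x y) := isBoundedUnder_le_quadraticMean_sub hx hy
  have bdd_yz : IsBoundedUnder (· ≤ ·) atTop (D y z) := isBoundedUnder_le_quadraticMean_sub hy hz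
  calc dF T f x z ≤ limsup (D x y + D y z) atTop :=
        limsup_le_limsup (.of_forall triangle) (nonneg x z).isCoboundedUnder_le
          (isBoundedUnder_le_add bdd_xy bdd_yz)
    _ ≤ dF T f x y + dF T f y z :=
        limsup_add_le (nonneg x y) bdd_xy (nonneg y z).isCoboundedUnder_le bdd_yz

end Pseudometric

section SensitivityAndExpansiveness

lemma ae_prod_iff_ae_ae₀ {α β : Type*} [MeasurableSpace α] [MeasurableSpace β] {μ : Measure α}
    {ν : Measure β} [SFinite ν] {p : α × β → Prop}
    (hp : NullMeasurableSet {z | p z} (μ.prod ν)) :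
    (∀ᵐ z ∂μ.prod ν, p z) ↔ ∀ᵐ x ∂μ, ∀ᵐ y ∂ν, p (x, y) := by
  obtain ⟨s, -, hs, hsp⟩ := hp.exists_measurable_superset_ae_eq
  have mem_iff : ∀ᵐ z ∂μ.prod ν, z ∈ s ↔ p z := eventuallyEq_set.1 hsp
  rw [← eventually_congr mem_iff, Measure.ae_prod_mem_iff_ae_ae_mem hs]
  refine eventually_congr ?_
  filter_upwards [Measure.ae_ae_of_ae_prod mem_iff] with x hx
  exact eventually_congr hx

variable {d : ℕ} [MeasurableSpace X] {μ : Measure X} {T : (Fin d → ℤ) → X → X} {f : X → ℂ}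

lemma meanExpansiveFun_iff_ae_measure_ball_eq_zero [IsProbabilityMeasure μ]
    (hT : ∀ j, MeasurePreserving (T j) μ μ) (hf : AEMeasurable f μ) :
    MeanExpansiveFun μ T f ↔
      ∃ ε : ℝ, 0 < ε ∧ ∀ᵐ x ∂μ, μ {y : X | dF T f x y ≤ ε} = 0 := by
  have aemeasurable_fT (j : Fin d → ℤ) : AEMeasurable (fun x ↦ f (T j x)) μ :=
    hf.comp_quasiMeasurePreserving (hT j).quasiMeasurePreserving
  have measurable_far (ε : ℝ) :
      NullMeasurableSet {p : X × X | ε < dF T f p.1 p.2} (μ.prod μ) :=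
    nullMeasurableSet_lt aemeasurable_const (aemeasurable_dF
      (fun j ↦ (aemeasurable_fT j).comp_quasiMeasurePreserving Measure.quasiMeasurePreserving_fst)
      (fun j ↦ (aemeasurable_fT j).comp_quasiMeasurePreserving Measure.quasiMeasurePreserving_snd))
  refine exists_congr fun ε ↦ and_congr_right fun _ ↦ ?_
  rw [← mem_ae_iff_prob_eq_one₀ (measurable_far ε)]
  refine (ae_prod_iff_ae_ae₀ (measurable_far ε)).trans ?_
  simp only [ae_iff, not_lt]

lemma sensitivityConstant_of_ae_measure_ball_eq_zero (hgen : ∀ᵐ x ∂μ, genericSq μ T f x) {ε : ℝ}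
    (hε : 0 < ε) (hball : ∀ᵐ x ∂μ, μ {y : X | dF T f x y ≤ ε} = 0) :
    SensitivityConstant μ T f ε := by
  refine ⟨hε, fun A _ hμA ↦ ?_⟩
  have frequently_mem : ∃ᵐ x ∂μ, x ∈ A := frequently_ae_mem_iff.2 hμA.ne'
  obtain ⟨x, hxA, hx_ball, hx⟩ := (frequently_mem.and_eventually (hball.and hgen)).exists
  have far : ∀ᵐ y ∂μ, ε < dF T f x y := by simpa only [ae_iff, not_lt] using hx_ball
  obtain ⟨y, hyA, hy_far, hy⟩ := (frequently_mem.and_eventually (far.and hgen)).exists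
  exact ⟨x, hxA, y, hyA, hx, hy, hy_far⟩

lemma SensitivityConstant.ae_measure_half_ball_eq_zero (hT : ∀ j, MeasurePreserving (T j) μ μ)
    (hf : AEMeasurable f μ) (hgen : ∀ᵐ x ∂μ, genericSq μ T f x) {ε : ℝ}
    (hsens : SensitivityConstant μ T f ε) : ∀ᵐ x ∂μ, μ {y : X | dF T f x y ≤ ε / 2} = 0 := by
  filter_upwards [hgen] with x hx
  have measurable_ball : NullMeasurableSet {y : X | dF T f x y ≤ ε / 2} μ :=
    nullMeasurableSet_le (aemeasurable_dF (fun _ ↦ aemeasurable_const) fun j ↦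
      hf.comp_quasiMeasurePreserving (hT j).quasiMeasurePreserving) aemeasurable_const
  obtain ⟨B, hB_subset, hB, hB_ae⟩ := measurable_ball.exists_measurable_subset_ae_eq
  rw [← measure_congr hB_ae]
  by_contra hB_ne
  obtain ⟨y, hyB, z, hzB, hy, hz, hyz⟩ := hsens.2 B hB (pos_iff_ne_zero.2 hB_ne)
  have hxy : dF T f y x ≤ ε / 2 := (dF_comm y x).trans_le (hB_subset hyB)
  have hxz : dF T f x z ≤ ε / 2 := hB_subset hzB
  linarith [dF_triangle hy hx hz]

end SensitivityAndExpansiveness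

/-- for an ergodic MPS and `f ∈ L²(X,μ)`, the following are equivalent:
(1) `μ-f`-mean sensitivity; (2) `μ-f`-mean expansivity;
(3) there is `ε > 0` with `μ(B_ε^f(x)) = 0` for a.e. `x`. -/
theorem stmt5 {d : ℕ}
    [MeasurableSpace X] (μ : Measure X) [IsProbabilityMeasure μ]
    (T : (Fin d → ℤ) → X → X)
    (hT : ∀ j, MeasurePreserving (T j) μ μ)
    (hTadd : ∀ i j, T (i + j) = T i ∘ T j)
    (herg : ∀ A : Set X, MeasurableSet A → (∀ j, T j ⁻¹' A = A) → μ A = 0 ∨ μ A = 1)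
    (f : X → ℂ) (hf : MemLp f 2 μ) :
    [MeanSensitiveFun μ T f,
     MeanExpansiveFun μ T f,
     ∃ ε : ℝ, 0 < ε ∧ ∀ᵐ x ∂μ, μ {y : X | dF T f x y ≤ ε} = 0].TFAE := by
  have hgen : ∀ᵐ x ∂μ, genericSq μ T f x := ae_genericSq hT hTadd herg hf
  have hfm : AEMeasurable f μ := hf.aestronglyMeasurable.aemeasurable
  tfae_have 1 → 3 := fun ⟨ε, hsens⟩ ↦
    ⟨ε / 2, half_pos hsens.1, hsens.ae_measure_half_ball_eq_zero hT hfm hgen⟩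
  tfae_have 3 → 1 := fun ⟨ε, hε, hball⟩ ↦
    ⟨ε, sensitivityConstant_of_ae_measure_ball_eq_zero hgen hε hball⟩
  tfae_have 2 ↔ 3 := meanExpansiveFun_iff_ae_measure_ball_eq_zero hT hfm
  tfae_finish
end
end

section
/- Let (X,T) be a topological dynamical system given by a continuous ℤ^d-action on a compact metric space. Then (X,T) is mean equicontinuous if and only if it is f-mean equicontinuous for every f ∈ C(X). -/
open MeasureTheory Filter Finset Metric
open scoped Classical

noncomputable section

variable {X : Type*}

/-- The Besicovitch pseudometric `d_b(x,y) = limsup_n (1/|F_n|) Σ_{j∈F_n} d(T^j x, T^j y)`. -/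
def dB {d : ℕ} [PseudoMetricSpace X] (T : (Fin d → ℤ) → X → X) (x y : X) : ℝ :=
  Filter.limsup (fun n : ℕ =>
    (∑ j ∈ Fbox d n, dist (T j x) (T j y)) / ((Fbox d n).card : ℝ)) Filter.atTop

/-!
Push the orbit pair `(T^j x, T^j y)`, `j ∈ F_n`, forward to `X × X`. On that compact space both
kinds of equicontinuity say that the averages of certain nonnegative continuous functions tend to
zero: of `dist a b` on one side, of all `‖f a - f b‖²` on the other. The family `‖f a - f b‖²` and
the single function `dist a b` have the same zero set, the diagonal (`f = dist · p` already
suffice), and by compactness a nonnegative continuous `g` that vanishes on the common zeros of a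
family `h` satisfies `g < ε + C ∑ i ∈ s, h i` for some finite `s`. Averaging this inequality shows
that smallness of the averages passes in both directions.
-/

open Topology
open scoped BigOperators

section Domination

variable {Z κ J : Type*} [TopologicalSpace Z] [CompactSpace Z] {g : Z → ℝ} {h : κ → Z → ℝ} {ε : ℝ}

lemma exists_finset_forall_lt_add_mul_sum (hg : Continuous g) (hh : ∀ i, Continuous (h i))
    (h_nonneg : ∀ i, 0 ≤ h i) (hgh : ∀ z, (∀ i, h i z = 0) → g z ≤ 0) (hε : 0 < ε) :
    ∃ (s : Finset κ) (C : ℕ), ∀ z, g z < ε + C * ∑ i ∈ s, h i z := by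
  let U : Finset κ × ℕ → Set Z := fun q => {z | g z < ε + q.2 * ∑ i ∈ q.1, h i z}
  have U_open (q) : IsOpen (U q) := isOpen_lt hg (by fun_prop)
  have U_mono : Monotone U := by
    rintro ⟨s, m⟩ ⟨t, n⟩ ⟨hst, hmn⟩ z (hz : g z < _)
    refine hz.trans_le ?_
    gcongr
    · exact Finset.sum_nonneg fun i _ => h_nonneg i z
    · exact fun i _ _ => h_nonneg i z
  have U_cover : Set.univ ⊆ ⋃ q, U q := fun z _ => by
    rw [Set.mem_iUnion]
    by_cases hz : ∀ i, h i z = 0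
    · exact ⟨(∅, 0), by simpa [U] using (hgh z hz).trans_lt hε⟩
    · obtain ⟨i, hi⟩ := not_forall.1 hz
      obtain ⟨m, hm⟩ := exists_nat_gt (g z / h i z)
      have hgm : g z < m * h i z := (div_lt_iff₀ ((h_nonneg i z).lt_of_ne' hi)).1 hm
      exact ⟨({i}, m), by simpa [U] using hgm.trans (lt_add_of_pos_left _ hε)⟩
  obtain ⟨⟨s, C⟩, hsC⟩ :=
    isCompact_univ.elim_directed_cover U U_open U_cover U_mono.directed_le
  exact ⟨s, C, fun z => hsC (Set.mem_univ z)⟩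

lemma expect_const_le_of_nonneg {c : ℝ} (hc : 0 ≤ c) (F : Finset J) : 𝔼 _j ∈ F, c ≤ c := by
  rcases F.eq_empty_or_nonempty with rfl | hF
  · rwa [expect_empty]
  · rw [expect_const hF]

lemma exists_finset_expect_comp_le (hg : Continuous g) (hh : ∀ i, Continuous (h i))
    (h_nonneg : ∀ i, 0 ≤ h i) (hgh : ∀ z, (∀ i, h i z = 0) → g z ≤ 0) (hε : 0 < ε) :
    ∃ (s : Finset κ), ∃ δ > 0, ∀ (F : Finset J) (w : J → Z),
      (∀ i ∈ s, 𝔼 j ∈ F, h i (w j) ≤ δ) → 𝔼 j ∈ F, g (w j) ≤ ε := by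
  obtain ⟨s, C, hsC⟩ :=
    exists_finset_forall_lt_add_mul_sum hg hh h_nonneg hgh (half_pos hε)
  refine ⟨s, ε / 2 / (C * #s + 1), by positivity, fun F w hw => ?_⟩
  calc 𝔼 j ∈ F, g (w j)
      ≤ 𝔼 j ∈ F, (ε / 2 + C * ∑ i ∈ s, h i (w j)) := expect_le_expect fun j _ => (hsC (w j)).le
    _ = (𝔼 _j ∈ F, ε / 2) + C * ∑ i ∈ s, 𝔼 j ∈ F, h i (w j) := by
        rw [expect_add_distrib, ← mul_expect, expect_sum_comm]
    _ ≤ ε / 2 + C * (#s • (ε / 2 / (C * #s + 1))) := by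
        gcongr
        · exact expect_const_le_of_nonneg (half_pos hε).le F
        · exact sum_le_card_nsmul _ _ _ hw
    _ = ε / 2 + C * #s / (C * #s + 1) * (ε / 2) := by rw [nsmul_eq_mul]; ring
    _ ≤ ε / 2 + 1 * (ε / 2) := by
        gcongr
        exact div_le_one_of_le₀ (by linarith) (by positivity)
    _ = ε := by ring

end Domination

section UpperMean

variable {ι J : Type*} {l : Filter ι} {F : ι → Finset J} {u : J → ℝ} {a : ℝ}

/-- The upper mean of `u` along the finite sets `F n` as `n` tends to `l`. An empty `F n`
contributes the average `0`. -/
def upperMean (l : Filter ι) (F : ι → Finset J) (u : J → ℝ) : ℝ :=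
  limsup (fun n => 𝔼 j ∈ F n, u j) l

lemma isBoundedUnder_ge_expect (hu : 0 ≤ u) :
    l.IsBoundedUnder (· ≥ ·) fun n => 𝔼 j ∈ F n, u j :=
  isBoundedUnder_of ⟨0, fun _ => expect_nonneg fun j _ => hu j⟩

lemma isBoundedUnder_le_expect (hu : BddAbove (Set.range u)) :
    l.IsBoundedUnder (· ≤ ·) fun n => 𝔼 j ∈ F n, u j := by
  obtain ⟨B, hB⟩ := hu
  refine isBoundedUnder_of ⟨max B 0, fun n => ?_⟩
  exact (expect_le_expect fun j _ => (hB (Set.mem_range_self j)).trans (le_max_left B 0)).trans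
    (expect_const_le_of_nonneg (le_max_right B 0) (F n))

lemma eventually_expect_lt_of_upperMean_lt (hu : BddAbove (Set.range u)) (h : upperMean l F u < a) :
    ∀ᶠ n in l, 𝔼 j ∈ F n, u j < a :=
  eventually_lt_of_limsup_lt h (isBoundedUnder_le_expect hu)

variable [l.NeBot]

lemma upperMean_le_of_eventually_le (hu : 0 ≤ u) (h : ∀ᶠ n in l, 𝔼 j ∈ F n, u j ≤ a) :
    upperMean l F u ≤ a :=
  limsup_le_of_le (isBoundedUnder_ge_expect hu).isCoboundedUnder_le h

lemma upperMean_nonneg (hu : 0 ≤ u) (hu' : BddAbove (Set.range u)) : 0 ≤ upperMean l F u :=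
  le_limsup_of_frequently_le (.of_forall fun _ => expect_nonneg fun j _ => hu j)
    (isBoundedUnder_le_expect hu')

lemma sqrt_upperMean (hu : 0 ≤ u) (hu' : BddAbove (Set.range u)) :
    √(upperMean l F u) = limsup (fun n => √(𝔼 j ∈ F n, u j)) l :=
  Real.sqrt_monotone.map_limsup_of_continuousAt _ Real.continuous_sqrt.continuousAt
    (isBoundedUnder_le_expect hu') (isBoundedUnder_ge_expect hu).isCoboundedUnder_le

lemma bddAbove_range_comp {Z : Type*} [TopologicalSpace Z] [CompactSpace Z] {g : Z → ℝ}
    (hg : Continuous g) (w : J → Z) : BddAbove (Set.range (g ∘ w)) :=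
  (isCompact_range hg).bddAbove.mono (Set.range_comp_subset_range w g)

theorem tendsto_upperMean_comp_zero {Y Z κ : Type*} [TopologicalSpace Z] [CompactSpace Z]
    {g : Z → ℝ} {h : κ → Z → ℝ} (hg : Continuous g) (hh : ∀ i, Continuous (h i))
    (g_nonneg : 0 ≤ g) (h_nonneg : ∀ i, 0 ≤ h i) (hgh : ∀ z, (∀ i, h i z = 0) → g z = 0)
    {m : Filter Y} (w : Y → J → Z)
    (hw : ∀ i, Tendsto (fun y => upperMean l F (h i ∘ w y)) m (𝓝 0)) :
    Tendsto (fun y => upperMean l F (g ∘ w y)) m (𝓝 0) := by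
  have gw_nonneg (y) : 0 ≤ g ∘ w y := fun j => g_nonneg (w y j)
  refine (nhds_basis_Icc_pos (0 : ℝ)).tendsto_right_iff.2 fun ε hε => ?_
  obtain ⟨s, δ, hδ, hs⟩ := exists_finset_expect_comp_le (J := J) hg hh h_nonneg
    (fun z hz => (hgh z hz).le) hε
  have h_small : ∀ᶠ y in m, ∀ i ∈ s, upperMean l F (h i ∘ w y) < δ :=
    (eventually_all_finset s).2 fun i _ => (hw i).eventually_lt_const hδ
  filter_upwards [h_small] with y hy
  have h_means : ∀ᶠ n in l, ∀ i ∈ s, 𝔼 j ∈ F n, h i (w y j) < δ :=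
    (eventually_all_finset s).2 fun i hi =>
      eventually_expect_lt_of_upperMean_lt (bddAbove_range_comp (hh i) (w y)) (hy i hi)
  have g_le : upperMean l F (g ∘ w y) ≤ ε :=
    upperMean_le_of_eventually_le (gw_nonneg y) <|
      h_means.mono fun n hn => hs (F n) (w y) fun i hi => (hn i hi).le
  have g_ge := upperMean_nonneg (l := l) (F := F) (gw_nonneg y) (bddAbove_range_comp hg (w y))
  exact ⟨by linarith, by linarith⟩

end UpperMean

section MeanEquicontinuity

variable {ι J E : Type*}

/-- Mean equicontinuity at the point `x` of a family of self-maps `T`, averaged along the finite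
sets `F n`: the mean distance of the orbits of `x` and `y` tends to `0` as `y` tends to `x`. -/
def MeanEquicontinuousAt [PseudoMetricSpace X] (l : Filter ι) (F : ι → Finset J)
    (T : J → X → X) (x : X) : Prop :=
  Tendsto (fun y => upperMean l F fun j => dist (T j x) (T j y)) (𝓝 x) (𝓝 0)

/-- `f`-mean equicontinuity at the point `x`: the mean square distance of the values of the
observable `f` along the orbits of `x` and `y` tends to `0` as `y` tends to `x`. The square root
in `d_f` does not affect convergence to `0` and is left out. -/
def FMeanEquicontinuousAt [TopologicalSpace X] [SeminormedAddCommGroup E] (l : Filter ι)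
    (F : ι → Finset J) (T : J → X → X) (f : X → E) (x : X) : Prop :=
  Tendsto (fun y => upperMean l F fun j => ‖f (T j x) - f (T j y)‖ ^ 2) (𝓝 x) (𝓝 0)

variable [PseudoMetricSpace X] [CompactSpace X] {l : Filter ι} [l.NeBot] {F : ι → Finset J}
  {T : J → X → X} {x : X}

lemma MeanEquicontinuousAt.fMeanEquicontinuousAt [SeminormedAddCommGroup E]
    (hT : MeanEquicontinuousAt l F T x) {f : X → E} (hf : Continuous f) :
    FMeanEquicontinuousAt l F T f x := by
  refine tendsto_upperMean_comp_zero (κ := Unit) (g := fun z : X × X => ‖f z.1 - f z.2‖ ^ 2)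
    (h := fun _ z => dist z.1 z.2) (by fun_prop) (fun _ => by fun_prop) (fun _ => by positivity)
    (fun _ _ => dist_nonneg) (fun z hz => ?_) (fun y j => (T j x, T j y)) fun _ => hT
  have hfz : Inseparable (f z.1) (f z.2) := (Metric.inseparable_iff.2 (hz ())).map hf
  rw [← dist_eq_norm, Metric.inseparable_iff.1 hfz, zero_pow two_ne_zero]

lemma meanEquicontinuousAt_of_forall_dist (𝕜 : Type*) [RCLike 𝕜]
    (hT : ∀ p, FMeanEquicontinuousAt l F T (fun z => (dist z p : 𝕜)) x) :
    MeanEquicontinuousAt l F T x := by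
  refine tendsto_upperMean_comp_zero (g := fun z : X × X => dist z.1 z.2)
    (h := fun p z => ‖(dist z.1 p - dist z.2 p : 𝕜)‖ ^ 2) (by fun_prop) (fun _ => by fun_prop)
    (fun _ => dist_nonneg) (fun _ _ => by positivity) (fun z hz => ?_)
    (fun y j => (T j x, T j y)) hT
  simpa using hz z.2

theorem stmt12_general (𝕜 : Type*) [RCLike 𝕜] (l : Filter ι) [l.NeBot] (F : ι → Finset J)
    (T : J → X → X) (x : X) :
    MeanEquicontinuousAt l F T x ↔
      ∀ f : X → 𝕜, Continuous f → FMeanEquicontinuousAt l F T f x :=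
  ⟨fun hT _ hf => hT.fMeanEquicontinuousAt hf,
    fun hT => meanEquicontinuousAt_of_forall_dist 𝕜 fun _ => hT _ (by fun_prop)⟩

end MeanEquicontinuity

section Boxes

variable [PseudoMetricSpace X] [CompactSpace X] {d : ℕ} (T : (Fin d → ℤ) → X → X) (x : X)

lemma forall_dB_lt_iff_meanEquicontinuousAt :
    (∀ ε : ℝ, 0 < ε → ∃ δ : ℝ, 0 < δ ∧ ∀ y : X, dist x y ≤ δ → dB T x y < ε) ↔
      MeanEquicontinuousAt atTop (Fbox d) T x := by
  have dB_eq (y) : dB T x y = upperMean atTop (Fbox d) fun j => dist (T j x) (T j y) := by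
    simp only [dB, upperMean, expect_eq_sum_div_card]
  have dB_nonneg (y) : 0 ≤ dB T x y :=
    dB_eq y ▸ upperMean_nonneg (fun _ => dist_nonneg)
      (bddAbove_range_comp continuous_dist fun j => (T j x, T j y))
  simp only [MeanEquicontinuousAt, ← dB_eq, nhds_basis_closedBall.tendsto_iff nhds_basis_ball,
    mem_closedBall', mem_ball, Real.dist_0_eq_abs, abs_of_nonneg (dB_nonneg _)]

lemma forall_dF_le_iff_fMeanEquicontinuousAt {f : X → ℂ} (hf : Continuous f) :
    (∀ ε : ℝ, 0 < ε → ∃ δ : ℝ, 0 < δ ∧ ∀ y : X, dist x y ≤ δ → dF T f x y ≤ ε) ↔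
      FMeanEquicontinuousAt atTop (Fbox d) T f x := by
  set D : X → ℝ := fun y => upperMean atTop (Fbox d) fun j => ‖f (T j x) - f (T j y)‖ ^ 2
  have bdd (y) : BddAbove (Set.range fun j => ‖f (T j x) - f (T j y)‖ ^ 2) :=
    bddAbove_range_comp (g := fun z : X × X => ‖f z.1 - f z.2‖ ^ 2) (by fun_prop)
      fun j => (T j x, T j y)
  have dF_eq (y) : dF T f x y = √(D y) := by
    simp only [D, sqrt_upperMean (fun _ => sq_nonneg _) (bdd y), dF, expect_eq_sum_div_card]
  have tendsto_sqrt_iff : Tendsto (fun y => √(D y)) (𝓝 x) (𝓝 0) ↔ Tendsto D (𝓝 x) (𝓝 0) := by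
    have sq_sqrt (y) : √(D y) ^ 2 = D y :=
      Real.sq_sqrt (upperMean_nonneg (fun _ => sq_nonneg _) (bdd y))
    exact ⟨fun h => by simpa [sq_sqrt] using h.pow 2, fun h => by simpa using h.sqrt⟩
  simp only [FMeanEquicontinuousAt, D, ← tendsto_sqrt_iff, dF_eq,
    nhds_basis_closedBall.tendsto_iff nhds_basis_closedBall, mem_closedBall',
    dist_zero_left, Real.norm_of_nonneg (Real.sqrt_nonneg _)]

end Boxes

/-- a TDS is mean equicontinuous iff it is `f`-mean equicontinuous for
every `f ∈ C(X)`. -/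
theorem stmt12 {d : ℕ}
    [MetricSpace X] [CompactSpace X]
    (T : (Fin d → ℤ) → X → X)
    (hTc : ∀ j, Continuous (T j))
    (hTadd : ∀ i j, T (i + j) = T i ∘ T j) :
    (∀ x : X, ∀ ε : ℝ, 0 < ε → ∃ δ : ℝ, 0 < δ ∧
        ∀ y : X, dist x y ≤ δ → dB T x y < ε) ↔
    (∀ f : X → ℂ, Continuous f →
      ∀ x : X, ∀ ε : ℝ, 0 < ε → ∃ δ : ℝ, 0 < δ ∧
        ∀ y : X, dist x y ≤ δ → dF T f x y ≤ ε) := by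
  simp +contextual only [forall_dB_lt_iff_meanEquicontinuousAt,
    forall_dF_le_iff_fMeanEquicontinuousAt, stmt12_general ℂ]
  exact ⟨fun H f hf x => H x f hf, fun H x f hf => H f hf x⟩
end
end

section
/- Let (X,T) be a topological dynamical system given by a continuous ℤ^d-action on a compact metric space and let f ∈ C(X). If f is almost periodic (the orbit {f∘T^j : j ∈ ℤ^d} is precompact in C(X) with the supremum norm), then f is mean equicontinuous. -/
open MeasureTheory Filter Finset Metric
open scoped Classical

noncomputable section

variable {X : Type*}

/-!
Evaluation `X × C(X, E) → E` is jointly continuous when `X` is locally compact, so a compact set of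
continuous maps is equicontinuous. For an almost periodic `f` the whole orbit `f ∘ T j` is therefore
equicontinuous: for `y` near `x` every `‖f (T j x) - f (T j y)‖` is at most `ε`, hence so is each
root mean square over a box, and the limsup of these.
-/

theorem equicontinuous_of_isCompact_continuousMap {E : Type*} [TopologicalSpace X]
    [UniformSpace E] [LocallyCompactPair X E] {S : Set C(X, E)} (hS : IsCompact S) :
    Equicontinuous fun (g : S) (x : X) => (g : C(X, E)) x := by
  intro x U hU
  have heval : Continuous (Function.uncurry fun (y : X) (g : C(X, E)) => g y) :=
    continuous_snd.eval continuous_fst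
  obtain ⟨V, hV, hVU⟩ :=
    hS.mem_uniformity_of_prod heval.continuousOn (Set.mem_univ x) (symm_le_uniformity hU)
  rw [nhdsWithin_univ] at hV
  filter_upwards [hV] with y hy g
  exact hVU y hy g g.2

theorem sqrt_sum_sq_div_card_le {ι : Type*} {s : Finset ι} {a : ι → ℝ} {C : ℝ} (hC : 0 ≤ C)
    (ha : ∀ i ∈ s, |a i| ≤ C) : √((∑ i ∈ s, a i ^ 2) / #s) ≤ C := by
  refine Real.sqrt_le_iff.2 ⟨hC, div_le_of_le_mul₀ (by positivity) (by positivity) ?_⟩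
  calc ∑ i ∈ s, a i ^ 2
      ≤ #s • C ^ 2 :=
        Finset.sum_le_card_nsmul _ _ _ fun i hi => sq_le_sq.2 ((ha i hi).trans (le_abs_self C))
    _ = C ^ 2 * #s := by rw [nsmul_eq_mul, mul_comm]

theorem dF_le_of_forall_norm_sub_le {d : ℕ} {T : (Fin d → ℤ) → X → X} {f : X → ℂ} {x y : X} {C : ℝ}
    (h : ∀ j, ‖f (T j x) - f (T j y)‖ ≤ C) : dF T f x y ≤ C := by
  have hC : 0 ≤ C := (norm_nonneg _).trans (h 0)
  refine limsup_le_of_le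
    (isCoboundedUnder_le_of_le atTop (x := 0) fun n => Real.sqrt_nonneg _) (.of_forall fun n => ?_)
  exact sqrt_sum_sq_div_card_le hC fun j _ => (abs_norm _).trans_le (h j)

theorem eventually_dF_le_of_equicontinuousAt {d : ℕ} [TopologicalSpace X]
    {T : (Fin d → ℤ) → X → X} {f : X → ℂ} {x : X} (h : EquicontinuousAt (fun j => f ∘ T j) x)
    {ε : ℝ} (hε : 0 < ε) : ∀ᶠ y in nhds x, dF T f x y ≤ ε := by
  filter_upwards [Metric.equicontinuousAt_iff_right.1 h ε hε] with y hy
  refine dF_le_of_forall_norm_sub_le fun j => ?_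
  rw [← dist_eq_norm]
  exact (hy j).le

theorem stmt13_general {d : ℕ} [TopologicalSpace X] [WeaklyLocallyCompactSpace X]
    (T : (Fin d → ℤ) → X → X)
    (hTc : ∀ j, Continuous (T j))
    (f : X → ℂ) (hf : Continuous f)
    (hap : IsCompact (closure (Set.range fun j : Fin d → ℤ =>
      (ContinuousMap.mk (f ∘ T j) (hf.comp (hTc j)) : C(X, ℂ)))))
    (x : X) {ε : ℝ} (hε : 0 < ε) :
    ∀ᶠ y in nhds x, dF T f x y ≤ ε := by
  have horbit : Equicontinuous fun j => f ∘ T j :=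
    (equicontinuous_of_isCompact_continuousMap hap).comp
      fun j => ⟨_, subset_closure (Set.mem_range_self j)⟩
  exact eventually_dF_le_of_equicontinuousAt (horbit x) hε

/-- if `f ∈ C(X)` is almost periodic (its orbit under the Koopman action is
precompact in the sup norm), then `f` is mean equicontinuous. -/
theorem stmt13 {d : ℕ}
    [MetricSpace X] [CompactSpace X]
    (T : (Fin d → ℤ) → X → X)
    (hTc : ∀ j, Continuous (T j))
    (hTadd : ∀ i j, T (i + j) = T i ∘ T j)
    (f : X → ℂ) (hf : Continuous f)
    (hap : IsCompact (closure (Set.range fun j : Fin d → ℤ =>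
      (ContinuousMap.mk (f ∘ T j) (hf.comp (hTc j)) : C(X, ℂ))))) :
    ∀ x : X, ∀ ε : ℝ, 0 < ε → ∃ δ : ℝ, 0 < δ ∧
      ∀ y : X, dist x y ≤ δ → dF T f x y ≤ ε := by
  intro x ε hε
  simpa only [mem_closedBall, dist_comm] using
    nhds_basis_closedBall.eventually_iff.1 (stmt13_general T hTc f hf hap x hε)
end
end
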